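/- arXiv:math/0010215 — 2 statements merged into one kernel-verified Lean document; each statement's English description precedes it below -/
import Mathlib

section
/- Let k be a field and V a k-vector space with an internal direct sum decomposition V = V₀ ⊕ V₁ ⊕ ⋯ ⊕ V_r where r ≥ 1 and each V_j is nonzero. For 0 ≤ i ≤ r write V_{<i} = ⊕_{j<i} V_j, V_{>i} = ⊕_{j>i} V_j, V_{≤i} = ⊕_{j≤i} V_j. For 0 ≤ i ≤ r let Z_i be the set of pairs (x, y) of one-dimensional subspaces of V such that there exists a one-dimensional subspace ℓ of V_i with x ⊆ V_{<i} + ℓ and y ⊆ V_{>i} + ℓ. Then for every 0 ≤ i < r, Z_i ∩ Z_{i+1} = {(x, y) : x ⊆ V_{≤i} and y ⊆ V_{>i}}. -/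
open Module

/-!
The sum decompositions `V_{≤i} = V_{<i} + V_i` and `V_{>i} = V_{>i+1} + V_{i+1}` give the inclusion
from left to right: the condition on `x` in `Z_i` forces `x ⊆ V_{≤i}`, and the condition on `y` in
`Z_{i+1}` forces `y ⊆ V_{>i}`. Conversely, a line `x ⊆ V_{<i} + V_i` is spanned by some `a + b`, and
`ℓ = ⟨b⟩` (any line of `V_i` if `b = 0`) witnesses membership in `Z_i`, as `y ⊆ V_{>i}` already;
the argument for `Z_{i+1}` exchanges the roles of `x` and `y`.
-/

/-- A line contained in `U + W`, with `W` nonzero, is contained in `U + ℓ` for some line `ℓ ⊆ W`. -/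
lemma exists_line_le_sup {k V : Type*} [Field k] [AddCommGroup V] [Module k V]
    {U W x : Submodule k V} (hW : W ≠ ⊥) (hx : finrank k x = 1) (hxUW : x ≤ U ⊔ W) :
    ∃ ℓ : Submodule k V, finrank k ℓ = 1 ∧ ℓ ≤ W ∧ x ≤ U ⊔ ℓ := by
  obtain ⟨v, -, hv⟩ := finrank_eq_one_iff'.mp hx
  obtain ⟨a, ha, b, hb, hab⟩ := Submodule.mem_sup.mp (hxUW v.2)
  -- It suffices to find a nonzero vector of `W` whose span contains `b`.
  obtain ⟨c, hc0, hcW, hbc⟩ : ∃ c : V, c ≠ 0 ∧ c ∈ W ∧ b ∈ Submodule.span k {c} := by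
    by_cases hb0 : b = 0
    · obtain ⟨c, hcW, hc0⟩ := W.exists_mem_ne_zero_of_ne_bot hW
      exact ⟨c, hc0, hcW, hb0 ▸ Submodule.zero_mem _⟩
    · exact ⟨b, hb0, hb, Submodule.mem_span_singleton_self b⟩
  refine ⟨Submodule.span k {c}, finrank_span_singleton hc0, ?_, ?_⟩
  · rwa [Submodule.span_singleton_le_iff_mem]
  · intro w hw
    obtain ⟨t, ht⟩ := hv ⟨w, hw⟩
    have htw : t • (v : V) = w := congrArg Subtype.val ht
    rw [← htw, ← hab]
    exact Submodule.smul_mem _ _ (Submodule.add_mem_sup ha hbc)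

/-- For a decomposition `V = V₀ ⊕ ⋯ ⊕ V_r` (`r ≥ 1`, all `V_j ≠ 0`), the sets
`Z_i = {(x, y) lines in V : ∃ line ℓ ⊆ V_i, x ⊆ V_{<i} + ℓ, y ⊆ V_{>i} + ℓ}` satisfy
`Z_i ∩ Z_{i+1} = {(x, y) : x ⊆ V_{≤i}, y ⊆ V_{>i}}` for `0 ≤ i < r`. -/
theorem stmt5 {k V : Type*} [Field k] [AddCommGroup V] [Module k V]
    (r : ℕ) (hr : 1 ≤ r) (Vf : ℕ → Submodule k V)
    (hne : ∀ j ≤ r, Vf j ≠ ⊥)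
    (hint : DirectSum.IsInternal fun j : Fin (r + 1) => Vf (j : ℕ))
    (i : ℕ) (hi : i < r) :
    {p : Submodule k V × Submodule k V |
        finrank k p.1 = 1 ∧ finrank k p.2 = 1 ∧
        ∃ ℓ : Submodule k V, finrank k ℓ = 1 ∧ ℓ ≤ Vf i ∧
          p.1 ≤ (⨆ j < i, Vf j) ⊔ ℓ ∧ p.2 ≤ (⨆ j ∈ Set.Ioc i r, Vf j) ⊔ ℓ} ∩
    {p : Submodule k V × Submodule k V |
        finrank k p.1 = 1 ∧ finrank k p.2 = 1 ∧
        ∃ ℓ : Submodule k V, finrank k ℓ = 1 ∧ ℓ ≤ Vf (i + 1) ∧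
          p.1 ≤ (⨆ j < i + 1, Vf j) ⊔ ℓ ∧ p.2 ≤ (⨆ j ∈ Set.Ioc (i + 1) r, Vf j) ⊔ ℓ} =
    {p : Submodule k V × Submodule k V |
        finrank k p.1 = 1 ∧ finrank k p.2 = 1 ∧
        p.1 ≤ (⨆ j ≤ i, Vf j) ∧ p.2 ≤ (⨆ j ∈ Set.Ioc i r, Vf j)} := by
  have hlt : (⨆ j < i + 1, Vf j) = ⨆ j ≤ i, Vf j := by simp only [Nat.lt_succ_iff]
  have hle : (⨆ j ≤ i, Vf j) = (⨆ j < i, Vf j) ⊔ Vf i := by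
    simp only [le_iff_lt_or_eq, iSup_or, iSup_sup_eq, iSup_iSup_eq_left]
  have hgt : (⨆ j ∈ Set.Ioc i r, Vf j) = (⨆ j ∈ Set.Ioc (i + 1) r, Vf j) ⊔ Vf (i + 1) := by
    have hins : Set.Ioc i r = insert (i + 1) (Set.Ioc (i + 1) r) := by
      ext j
      simp only [Set.mem_Ioc, Set.mem_insert_iff]
      omega
    rw [hins, iSup_insert, sup_comm]
  ext ⟨x, y⟩
  simp only [Set.mem_inter_iff, Set.mem_ofPred_eq]
  constructor
  · rintro ⟨⟨hx, hy, ℓ, -, hℓ, hxℓ, -⟩, -, -, m, -, hm, -, hym⟩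
    exact ⟨hx, hy, hle ▸ hxℓ.trans (sup_le_sup_left hℓ _), hgt ▸ hym.trans (sup_le_sup_left hm _)⟩
  · rintro ⟨hx, hy, hxi, hyi⟩
    obtain ⟨ℓ, hℓ1, hℓ, hxℓ⟩ := exists_line_le_sup (hne i hi.le) hx (hle ▸ hxi)
    obtain ⟨m, hm1, hm, hym⟩ := exists_line_le_sup (hne (i + 1) hi) hy (hgt ▸ hyi)
    exact ⟨⟨hx, hy, ℓ, hℓ1, hℓ, hxℓ, hyi.trans le_sup_left⟩,
      hx, hy, m, hm1, hm, (hlt ▸ hxi).trans le_sup_left, hym⟩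
end

section
/- Let k be a field and V a k-vector space with an internal direct sum decomposition V = V₀ ⊕ V₁ ⊕ ⋯ ⊕ V_r where each V_j is nonzero. For 0 ≤ i ≤ r write V_{<i} = ⊕_{j<i} V_j and V_{>i} = ⊕_{j>i} V_j. Fix 0 ≤ i ≤ r and let x, y be one-dimensional subspaces of V such that there exists a one-dimensional subspace ℓ of V_i with x ⊆ V_{<i} + ℓ and y ⊆ V_{>i} + ℓ. Then: (a) if x ⊄ V_{<i} or y ⊄ V_{>i}, there is exactly one one-dimensional subspace ℓ of V_i with x ⊆ V_{<i} + ℓ and y ⊆ V_{>i} + ℓ; (b) if x ⊆ V_{<i} and y ⊆ V_{>i}, then every one-dimensional subspace ℓ of V_i satisfies x ⊆ V_{<i} + ℓ and y ⊆ V_{>i} + ℓ. -/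
/-!
Each of `V_{<i}` and `V_{>i}` is a sum of summands other than `V_i`, so it meets `V_i` trivially.
If a vector `v ∈ x` lies outside `V_{<i}`, its component along `V_i` is a nonzero vector, uniquely
determined by `v`, and every admissible `ℓ` contains it; hence `ℓ` is its span. The same argument
applies to `y` and `V_{>i}`. Part (b) is monotonicity of `⊔`.
-/

open Module

theorem line_eq_span_singleton {k V : Type*} [Field k] [AddCommGroup V] [Module k V]
    {ℓ : Submodule k V} (h : finrank k ℓ = 1) {b : V} (hb : b ∈ ℓ) (hb0 : b ≠ 0) :
    ℓ = Submodule.span k {b} := by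
  refine le_antisymm (fun w hw => ?_) ((Submodule.span_singleton_le_iff_mem _ _).2 hb)
  have hb0' : (⟨b, hb⟩ : ℓ) ≠ 0 := fun h0 => hb0 (congrArg Subtype.val h0)
  obtain ⟨c, hc⟩ := (finrank_eq_one_iff_of_nonzero' _ hb0').1 h ⟨w, hw⟩
  exact Submodule.mem_span_singleton.2 ⟨c, congrArg Subtype.val hc⟩

/-- If `A` and `B` are independent and `x` is not contained in `A`, then at most one line `ℓ` of `B`
satisfies `x ⊆ A + ℓ`: it is spanned by the `B`-component of any vector of `x` outside `A`. -/
theorem line_unique {k V : Type*} [Field k] [AddCommGroup V] [Module k V]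
    {A B x ℓ ℓ' : Submodule k V} (hd : Disjoint B A) (hx : ¬ x ≤ A)
    (h : finrank k ℓ = 1) (h' : finrank k ℓ' = 1) (hB : ℓ ≤ B) (hB' : ℓ' ≤ B)
    (hxl : x ≤ A ⊔ ℓ) (hxl' : x ≤ A ⊔ ℓ') : ℓ = ℓ' := by
  obtain ⟨v, hv, hvA⟩ := SetLike.not_le_iff_exists.1 hx
  obtain ⟨a, ha, b, hb, hab⟩ := Submodule.mem_sup.1 (hxl hv)
  obtain ⟨a', ha', b', hb', hab'⟩ := Submodule.mem_sup.1 (hxl' hv)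
  have hbb : b = b' := by
    have e : b - b' = a' - a := by
      rw [sub_eq_sub_iff_add_eq_add, add_comm b a, hab, hab']
    exact sub_eq_zero.1 (Submodule.disjoint_def.1 hd _ (B.sub_mem (hB hb) (hB' hb'))
      (e ▸ A.sub_mem ha' ha))
  subst hbb
  have hb0 : b ≠ 0 := by
    rintro rfl
    exact hvA (by rw [← hab, add_zero]; exact ha)
  rw [line_eq_span_singleton h hb hb0, line_eq_span_singleton h' hb' hb0]

/-- Fibers of the map `Z̃_i → Z_i`: given lines `x`, `y` in `V` admitting a line
`ℓ ⊆ V_i` with `x ⊆ V_{<i} + ℓ` and `y ⊆ V_{>i} + ℓ`, (a) if `x ⊄ V_{<i}` or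
`y ⊄ V_{>i}`, such a line `ℓ` is unique; (b) if `x ⊆ V_{<i}` and `y ⊆ V_{>i}`,
every line `ℓ ⊆ V_i` works. -/
theorem stmt7 {k V : Type*} [Field k] [AddCommGroup V] [Module k V]
    (r : ℕ) (Vf : ℕ → Submodule k V)
    (hne : ∀ j ≤ r, Vf j ≠ ⊥)
    (hint : DirectSum.IsInternal fun j : Fin (r + 1) => Vf (j : ℕ))
    (i : ℕ) (hi : i ≤ r)
    (x y : Submodule k V) (hx : finrank k x = 1) (hy : finrank k y = 1)
    (hexists : ∃ ℓ : Submodule k V, finrank k ℓ = 1 ∧ ℓ ≤ Vf i ∧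
      x ≤ (⨆ j < i, Vf j) ⊔ ℓ ∧ y ≤ (⨆ j ∈ Set.Ioc i r, Vf j) ⊔ ℓ) :
    ((¬ x ≤ (⨆ j < i, Vf j) ∨ ¬ y ≤ (⨆ j ∈ Set.Ioc i r, Vf j)) →
      ∃! ℓ : Submodule k V, finrank k ℓ = 1 ∧ ℓ ≤ Vf i ∧
        x ≤ (⨆ j < i, Vf j) ⊔ ℓ ∧ y ≤ (⨆ j ∈ Set.Ioc i r, Vf j) ⊔ ℓ) ∧
    ((x ≤ (⨆ j < i, Vf j) ∧ y ≤ (⨆ j ∈ Set.Ioc i r, Vf j)) →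
      ∀ ℓ : Submodule k V, finrank k ℓ = 1 → ℓ ≤ Vf i →
        x ≤ (⨆ j < i, Vf j) ⊔ ℓ ∧ y ≤ (⨆ j ∈ Set.Ioc i r, Vf j) ⊔ ℓ) := by
  have hind := hint.submodule_iSupIndep ⟨i, Nat.lt_succ_of_le hi⟩
  have hlt : Disjoint (Vf i) (⨆ j < i, Vf j) := by
    refine hind.mono_right (iSup₂_le fun j hj => ?_)
    exact le_iSup₂_of_le (⟨j, by omega⟩ : Fin (r + 1)) (by simp [Fin.ext_iff]; omega) le_rfl
  have hgt : Disjoint (Vf i) (⨆ j ∈ Set.Ioc i r, Vf j) := by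
    refine hind.mono_right (iSup₂_le fun j hj => ?_)
    obtain ⟨h1, h2⟩ := hj
    exact le_iSup₂_of_le (⟨j, by omega⟩ : Fin (r + 1)) (by simp [Fin.ext_iff]; omega) le_rfl
  refine ⟨fun h => ?_, fun h ℓ _ _ => ⟨h.1.trans le_sup_left, h.2.trans le_sup_left⟩⟩
  obtain ⟨ℓ, h1, hV, hxl, hyl⟩ := hexists
  refine ⟨ℓ, ⟨h1, hV, hxl, hyl⟩, ?_⟩
  rintro ℓ' ⟨h1', hV', hxl', hyl'⟩
  rcases h with h | h
  · exact line_unique hlt h h1' h1 hV' hV hxl' hxl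
  · exact line_unique hgt h h1' h1 hV' hV hyl' hyl
end
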